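/- Let y be a quasi shell solution and let C_u > 0 be a constant such that ϱ(r) ≤ C_u γ(r)^q/r⁴ and p(r) ≤ C_u γ(r)^{q+1}/r⁴ for all r ∈ [R₀, 2R₀] with γ(r) ≥ 0; set C_m = max{1, C_u, 4πC_u}. Then there exists ε > 0, depending only on k, ℓ, L₀ and C_u, such that if R₀ ≤ ε and 0 < δ ≤ R₀^{(q+3)/(q+1)}/(C_m 8^{1/(q+1)}), then γ′(r) ≥ 1/(2r) for all r ∈ [R₀, R₀ + δ]. -/

import Mathlib

/-!
Write `R` for the inner radius and `x = (r - R) / R`. Since `y` is nonincreasing,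
`γ(s) ≤ log (s / R) ≤ x` for `s ≤ r`, so the matter vanishes on `(0, R]`, and the assumed upper
bounds on `ϱ` and `p` become powers of `x`. Integrating `s² ϱ` over `[R, r]` gains one more factor
`x`, hence `m(r)` and `4πr p(r)` are both controlled by `4πC_u x^(q+1)`. The admissible width is
the one that makes this quantity at most `R² / 8`, which gives `m(r) ≤ r / 8` and
`4πr p(r) ≤ 1 / (8r)`. Then `y'(r) ≥ -1 / (3r)`, while the logarithm in `γ` contributes `1 / r`.
For `R ≤ 1` the width is at most `R`, so that `R + δ` stays inside `[R, 2R]`.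
-/

open MeasureTheory Real Set Filter

/-- The constant `c_ℓ = 2π ∫₀¹ s^ℓ (1-s)^{-1/2} ds`. -/
noncomputable def cConst (ℓ : ℝ) : ℝ :=
  2 * π * ∫ s in Set.Ioc (0 : ℝ) 1, s ^ ℓ / Real.sqrt (1 - s)

/-- Energy density of the massless Einstein--Vlasov ansatz. -/
noncomputable def rho (k ℓ L0 : ℝ) (y : ℝ → ℝ) (r : ℝ) : ℝ :=
  cConst ℓ * r ^ (2 * ℓ) *
    ∫ ε in Set.Ioc (Real.sqrt L0 / r) (Real.exp (y r)),
      (1 - ε * Real.exp (-(y r))) ^ k * ε ^ 2 * (ε ^ 2 - L0 / r ^ 2) ^ (ℓ + 1 / 2)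

/-- Radial pressure of the massless Einstein--Vlasov ansatz. -/
noncomputable def pres (k ℓ L0 : ℝ) (y : ℝ → ℝ) (r : ℝ) : ℝ :=
  (cConst ℓ / (2 * ℓ + 3)) * r ^ (2 * ℓ) *
    ∫ ε in Set.Ioc (Real.sqrt L0 / r) (Real.exp (y r)),
      (1 - ε * Real.exp (-(y r))) ^ k * (ε ^ 2 - L0 / r ^ 2) ^ (ℓ + 3 / 2)

/-- The Hawking mass `m(r) = 4π ∫₀ʳ s² ϱ(s) ds`. -/
noncomputable def hawkingMass (k ℓ L0 : ℝ) (y : ℝ → ℝ) (r : ℝ) : ℝ :=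
  4 * π * ∫ s in Set.Ioc (0 : ℝ) r, s ^ 2 * rho k ℓ L0 y s

/-- The characteristic function `γ(r) = y(r) - (1/2) ln (L₀ / r²)`. -/
noncomputable def charFn (L0 : ℝ) (y : ℝ → ℝ) (r : ℝ) : ℝ :=
  y r - (1 / 2) * Real.log (L0 / r ^ 2)

/-- The inner radius `R₀ = √L₀ e^{-y(0)}`. -/
noncomputable def innerRadius (L0 : ℝ) (y : ℝ → ℝ) : ℝ :=
  Real.sqrt L0 * Real.exp (-(y 0))

/-- A quasi shell solution of the massless Einstein--Vlasov system. -/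
def QuasiShell (k ℓ L0 : ℝ) (y : ℝ → ℝ) : Prop :=
  ContDiffOn ℝ 1 y (Set.Ici 0) ∧
  ∀ r > 0, 2 * hawkingMass k ℓ L0 y r / r < 1 ∧
    HasDerivAt y
      (-(1 - 2 * hawkingMass k ℓ L0 y r / r)⁻¹ *
        (4 * π * r * pres k ℓ L0 y r + hawkingMass k ℓ L0 y r / r ^ 2)) r

/-- `C_m = max{1, C_u, 4πC_u}`. -/
noncomputable def Cmax (Cu : ℝ) : ℝ := max 1 (max Cu (4 * π * Cu))

section Matter

variable {k ℓ L0 r : ℝ} {y : ℝ → ℝ}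

theorem cConst_nonneg : 0 ≤ cConst ℓ :=
  mul_nonneg two_pi_pos.le <| setIntegral_nonneg measurableSet_Ioc fun _ hs =>
    div_nonneg (rpow_nonneg hs.1.le _) (sqrt_nonneg _)

theorem one_sub_mul_exp_neg_nonneg {a b : ℝ} (h : a ≤ exp b) : 0 ≤ 1 - a * exp (-b) := by
  rw [exp_neg, sub_nonneg]
  exact mul_inv_le_one_of_le₀ h (exp_pos b).le

theorem sq_sub_div_sq_nonneg {a : ℝ} (hr : 0 ≤ r) (h : √L0 / r < a) :
    0 ≤ a ^ 2 - L0 / r ^ 2 := by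
  rw [sub_nonneg]
  calc L0 / r ^ 2 ≤ √L0 ^ 2 / r ^ 2 := by
        gcongr
        exact sq_sqrt' (x := L0) ▸ le_max_left L0 0
    _ = (√L0 / r) ^ 2 := (div_pow _ _ _).symm
    _ ≤ a ^ 2 := by gcongr

theorem rho_nonneg (hr : 0 ≤ r) : 0 ≤ rho k ℓ L0 y r := by
  refine mul_nonneg (mul_nonneg cConst_nonneg (rpow_nonneg hr _)) ?_
  refine setIntegral_nonneg measurableSet_Ioc fun a ha => ?_
  exact mul_nonneg (mul_nonneg (rpow_nonneg (one_sub_mul_exp_neg_nonneg ha.2) _) (sq_nonneg a))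
    (rpow_nonneg (sq_sub_div_sq_nonneg hr ha.1) _)

theorem pres_nonneg (hl : -(3 / 2) ≤ ℓ) (hr : 0 ≤ r) : 0 ≤ pres k ℓ L0 y r := by
  have hcoeff : 0 ≤ cConst ℓ / (2 * ℓ + 3) := div_nonneg cConst_nonneg (by linarith)
  refine mul_nonneg (mul_nonneg hcoeff (rpow_nonneg hr _)) ?_
  refine setIntegral_nonneg measurableSet_Ioc fun a ha => ?_
  exact mul_nonneg (rpow_nonneg (one_sub_mul_exp_neg_nonneg ha.2) _)
    (rpow_nonneg (sq_sub_div_sq_nonneg hr ha.1) _)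

theorem hawkingMass_nonneg : 0 ≤ hawkingMass k ℓ L0 y r :=
  mul_nonneg (by positivity) <| setIntegral_nonneg measurableSet_Ioc fun s hs =>
    mul_nonneg (sq_nonneg s) (rho_nonneg hs.1.le)

end Matter

section CharFn

variable {L0 r : ℝ} {y : ℝ → ℝ}

theorem innerRadius_pos (hL : 0 < L0) : 0 < innerRadius L0 y :=
  mul_pos (sqrt_pos.2 hL) (exp_pos _)

theorem charFn_eq_sub_log_sqrt_div (hL : 0 < L0) (hr : 0 < r) :
    charFn L0 y r = y r - log (√L0 / r) := by
  rw [charFn, log_div hL.ne' (pow_pos hr 2).ne', log_div (sqrt_pos.2 hL).ne' hr.ne', log_pow,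
    log_sqrt hL.le]
  push_cast
  ring

theorem charFn_eq_sub_add_log_div_innerRadius (hL : 0 < L0) (hr : 0 < r) :
    charFn L0 y r = y r - y 0 + log (r / innerRadius L0 y) := by
  have hsqrt : √L0 ≠ 0 := (sqrt_pos.2 hL).ne'
  rw [charFn_eq_sub_log_sqrt_div hL hr, log_div hsqrt hr.ne',
    log_div hr.ne' (innerRadius_pos hL).ne', innerRadius, log_mul hsqrt (exp_pos _).ne', log_exp]
  ring

theorem charFn_nonpos_iff (hL : 0 < L0) (hr : 0 < r) :
    charFn L0 y r ≤ 0 ↔ exp (y r) ≤ √L0 / r := by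
  rw [charFn_eq_sub_log_sqrt_div hL hr, sub_nonpos, le_log_iff_exp_le (by positivity)]

theorem rho_eq_zero_of_charFn_nonpos {k ℓ : ℝ} (hL : 0 < L0) (hr : 0 < r)
    (h : charFn L0 y r ≤ 0) : rho k ℓ L0 y r = 0 := by
  rw [rho, Ioc_eq_empty_of_le ((charFn_nonpos_iff hL hr).1 h), setIntegral_empty, mul_zero]

theorem pres_eq_zero_of_charFn_nonpos {k ℓ : ℝ} (hL : 0 < L0) (hr : 0 < r)
    (h : charFn L0 y r ≤ 0) : pres k ℓ L0 y r = 0 := by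
  rw [pres, Ioc_eq_empty_of_le ((charFn_nonpos_iff hL hr).1 h), setIntegral_empty, mul_zero]

theorem hasDerivAt_charFn {y' : ℝ} (hL : L0 ≠ 0) (hr : r ≠ 0) (hy : HasDerivAt y y' r) :
    HasDerivAt (charFn L0 y) (y' + 1 / r) r := by
  have hlog : HasDerivAt (fun s => y s - 1 / 2 * log L0 + log s) (y' + 1 / r) r := by
    rw [one_div r]
    exact (hy.sub_const _).add (hasDerivAt_log hr)
  refine hlog.congr_of_eventuallyEq ?_
  filter_upwards [isOpen_ne.mem_nhds hr] with s hs
  rw [charFn, log_div hL (pow_ne_zero 2 hs), log_pow]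
  push_cast
  ring

end CharFn

section Bounds

theorem le_mul_rpow_div_of_nonpos_imp_eq_zero {f g x C q d : ℝ} (hC : 0 ≤ C) (hq : 0 ≤ q)
    (hd : 0 ≤ d) (hx : 0 ≤ x) (hgx : g ≤ x) (hzero : g ≤ 0 → f = 0)
    (hf : 0 ≤ g → f ≤ C * g ^ q / d) : f ≤ C * x ^ q / d := by
  rcases le_total g 0 with hg | hg
  · rw [hzero hg]
    positivity
  · exact (hf hg).trans (by gcongr)

theorem hawkingMass_le_of_sq_mul_rho_le {k ℓ L0 R r K : ℝ} {y : ℝ → ℝ} (hR : 0 ≤ R) (hRr : R ≤ r)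
    (hzero : ∀ s ∈ Ioc 0 R, rho k ℓ L0 y s = 0)
    (hK : ∀ s ∈ Ioc R r, s ^ 2 * rho k ℓ L0 y s ≤ K) :
    hawkingMass k ℓ L0 y r ≤ 4 * π * (K * (r - R)) := by
  have hsupport : ∫ s in Ioc 0 r, s ^ 2 * rho k ℓ L0 y s =
      ∫ s in Ioc R r, s ^ 2 * rho k ℓ L0 y s := by
    refine setIntegral_eq_of_subset_of_forall_sdiff_eq_zero measurableSet_Ioc
      (Ioc_subset_Ioc_left hR) fun s ⟨hs, hsR⟩ => ?_
    rw [hzero s ⟨hs.1, not_lt.1 fun h => hsR ⟨h, hs.2⟩⟩, mul_zero]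
  have hnorm : ∀ s ∈ Ioc R r, ‖s ^ 2 * rho k ℓ L0 y s‖ ≤ K := fun s hs => by
    rw [norm_of_nonneg (mul_nonneg (sq_nonneg s) (rho_nonneg (hR.trans hs.1.le)))]
    exact hK s hs
  rw [hawkingMass, hsupport]
  gcongr
  calc ∫ s in Ioc R r, s ^ 2 * rho k ℓ L0 y s
      ≤ ‖∫ s in Ioc R r, s ^ 2 * rho k ℓ L0 y s‖ := le_norm_self _
    _ ≤ K * volume.real (Ioc R r) := norm_setIntegral_le_of_norm_le_const measure_Ioc_lt_top hnorm
    _ = K * (r - R) := by rw [Real.volume_real_Ioc_of_le hRr]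

theorem one_div_two_mul_le_of_mass_le {m P r : ℝ} (hr : 0 < r) (hm : m ≤ r / 8)
    (hP : P ≤ 1 / (8 * r)) :
    1 / (2 * r) ≤ -(1 - 2 * m / r)⁻¹ * (P + m / r ^ 2) + 1 / r := by
  have hmr : 2 * m / r ≤ 1 / 4 := by rw [div_le_iff₀ hr]; linarith
  have hinv : (1 - 2 * m / r)⁻¹ ≤ 4 / 3 := by
    rw [inv_le_comm₀ (by linarith) (by norm_num)]
    linarith
  have hsum : P + m / r ^ 2 ≤ 1 / (4 * r) := by
    calc P + m / r ^ 2 ≤ 1 / (8 * r) + r / 8 / r ^ 2 := by gcongr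
      _ = 1 / (4 * r) := by field_simp; norm_num
  have hprod : (1 - 2 * m / r)⁻¹ * (P + m / r ^ 2) ≤ 1 / (3 * r) := by
    calc (1 - 2 * m / r)⁻¹ * (P + m / r ^ 2) ≤ (1 - 2 * m / r)⁻¹ * (1 / (4 * r)) := by
          gcongr
          exact inv_nonneg.2 (by linarith)
      _ ≤ 4 / 3 * (1 / (4 * r)) := by gcongr
      _ = 1 / (3 * r) := by field_simp
  calc 1 / (2 * r) ≤ -(1 / (3 * r)) + 1 / r := by field_simp; norm_num
    _ ≤ -(1 - 2 * m / r)⁻¹ * (P + m / r ^ 2) + 1 / r := by rw [neg_mul]; gcongr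

end Bounds

namespace QuasiShell

variable {k ℓ q L0 C r : ℝ} {y : ℝ → ℝ}

theorem antitoneOn (hl : -(3 / 2) ≤ ℓ) (hy : QuasiShell k ℓ L0 y) : AntitoneOn y (Ici 0) := by
  refine antitoneOn_of_hasDerivWithinAt_nonpos (convex_Ici 0) hy.1.continuousOn
    (fun s hs => (hy.2 s (interior_Ici.subset hs)).2.hasDerivWithinAt) fun s hs => ?_
  have hs : 0 < s := interior_Ici.subset hs
  have hinv : 0 ≤ (1 - 2 * hawkingMass k ℓ L0 y s / s)⁻¹ :=
    inv_nonneg.2 (by linarith [(hy.2 s hs).1])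
  have hp : 0 ≤ pres k ℓ L0 y s := pres_nonneg hl hs.le
  have hm : 0 ≤ hawkingMass k ℓ L0 y s := hawkingMass_nonneg
  rw [neg_mul, neg_nonpos]
  positivity

theorem charFn_le_log (hl : -(3 / 2) ≤ ℓ) (hL : 0 < L0) (hy : QuasiShell k ℓ L0 y) (hr : 0 < r) :
    charFn L0 y r ≤ log (r / innerRadius L0 y) := by
  have hyr : y r ≤ y 0 := hy.antitoneOn hl self_mem_Ici hr.le hr.le
  linarith [charFn_eq_sub_add_log_div_innerRadius (y := y) hL hr]

theorem charFn_nonpos_of_le_innerRadius (hl : -(3 / 2) ≤ ℓ) (hL : 0 < L0)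
    (hy : QuasiShell k ℓ L0 y) (hr : 0 < r) (hrR : r ≤ innerRadius L0 y) :
    charFn L0 y r ≤ 0 :=
  have hR : 0 < innerRadius L0 y := innerRadius_pos hL
  (hy.charFn_le_log hl hL hr).trans
    (log_nonpos (div_pos hr hR).le ((div_le_one hR).2 hrR))

theorem charFn_le_sub_div (hl : -(3 / 2) ≤ ℓ) (hL : 0 < L0) (hy : QuasiShell k ℓ L0 y)
    (hr : 0 < r) : charFn L0 y r ≤ (r - innerRadius L0 y) / innerRadius L0 y := by
  have hR : 0 < innerRadius L0 y := innerRadius_pos hL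
  rw [sub_div, div_self hR.ne']
  exact (hy.charFn_le_log hl hL hr).trans (log_le_sub_one_of_pos (div_pos hr hR))

theorem hawkingMass_le (hl : -(3 / 2) ≤ ℓ) (hL : 0 < L0) (hy : QuasiShell k ℓ L0 y)
    (hC : 0 ≤ C) (hq : 0 ≤ q) (hr : innerRadius L0 y ≤ r)
    (hrho : ∀ s, innerRadius L0 y ≤ s → s ≤ r → 0 ≤ charFn L0 y s →
      rho k ℓ L0 y s ≤ C * charFn L0 y s ^ q / s ^ 4) :
    hawkingMass k ℓ L0 y r ≤
      4 * π * C * ((r - innerRadius L0 y) / innerRadius L0 y) ^ (q + 1) / innerRadius L0 y := by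
  have hR : 0 < innerRadius L0 y := innerRadius_pos hL
  set R := innerRadius L0 y
  set x := (r - R) / R with hx
  have hx0 : 0 ≤ x := div_nonneg (sub_nonneg.2 hr) hR.le
  have hzero : ∀ s ∈ Ioc 0 R, rho k ℓ L0 y s = 0 := fun s hs =>
    rho_eq_zero_of_charFn_nonpos hL hs.1 (hy.charFn_nonpos_of_le_innerRadius hl hL hs.1 hs.2)
  have hK : ∀ s ∈ Ioc R r, s ^ 2 * rho k ℓ L0 y s ≤ C * x ^ q / R ^ 2 := fun s ⟨hRs, hsr⟩ => by
    have hs : 0 < s := hR.trans hRs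
    have hsx : charFn L0 y s ≤ x := (hy.charFn_le_sub_div hl hL hs).trans (by rw [hx]; gcongr)
    have hrho_s : rho k ℓ L0 y s ≤ C * x ^ q / s ^ 4 :=
      le_mul_rpow_div_of_nonpos_imp_eq_zero hC hq (by positivity) hx0 hsx
        (rho_eq_zero_of_charFn_nonpos hL hs) (hrho s hRs.le hsr)
    calc s ^ 2 * rho k ℓ L0 y s ≤ s ^ 2 * (C * x ^ q / s ^ 4) := by gcongr
      _ = C * x ^ q / s ^ 2 := by field_simp
      _ ≤ C * x ^ q / R ^ 2 := by gcongr
  calc hawkingMass k ℓ L0 y r ≤ 4 * π * (C * x ^ q / R ^ 2 * (r - R)) :=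
        hawkingMass_le_of_sq_mul_rho_le hR.le hr hzero hK
    _ = 4 * π * C * (x ^ q * x) / R := by rw [hx]; field_simp
    _ = 4 * π * C * x ^ (q + 1) / R := by rw [rpow_add_one' hx0 (by positivity)]

theorem pres_le (hl : -(3 / 2) ≤ ℓ) (hL : 0 < L0) (hy : QuasiShell k ℓ L0 y)
    (hC : 0 ≤ C) (hq : 0 ≤ q) (hr : innerRadius L0 y ≤ r)
    (hpres : 0 ≤ charFn L0 y r → pres k ℓ L0 y r ≤ C * charFn L0 y r ^ q / r ^ 4) :
    pres k ℓ L0 y r ≤ C * ((r - innerRadius L0 y) / innerRadius L0 y) ^ q / r ^ 4 := by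
  have hR : 0 < innerRadius L0 y := innerRadius_pos hL
  have hr0 : 0 < r := hR.trans_le hr
  exact le_mul_rpow_div_of_nonpos_imp_eq_zero hC hq (by positivity)
    (div_nonneg (sub_nonneg.2 hr) hR.le) (hy.charFn_le_sub_div hl hL hr0)
    (pres_eq_zero_of_charFn_nonpos hL hr0) hpres

end QuasiShell

section ShellWidth

variable {q C R : ℝ}

/-- The largest distance `R^((q+3)/(q+1)) / (C 8^(1/(q+1)))` from the inner radius `R` at which
`γ'` is controlled, where `C` stands for `C_m`. It is the `δ` that solves
`(C δ / R)^(q+1) = R² / 8`. -/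
noncomputable def shellWidth (q C R : ℝ) : ℝ :=
  R ^ ((q + 3) / (q + 1)) / (C * 8 ^ (1 / (q + 1)))

theorem mul_shellWidth_div_rpow (hq : -1 < q) (hC : 0 < C) (hR : 0 < R) :
    (C * (shellWidth q C R / R)) ^ (q + 1) = R ^ 2 / 8 := by
  have hq1 : q + 1 ≠ 0 := by linarith
  have hexp : R ^ ((q + 3) / (q + 1)) = R ^ (2 / (q + 1)) * R := by
    rw [← rpow_add_one hR.ne']
    congr 1
    field_simp
    ring
  have hbase : C * (shellWidth q C R / R) = R ^ (2 / (q + 1)) / 8 ^ (1 / (q + 1)) := by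
    rw [shellWidth, hexp]
    field_simp
  rw [hbase, div_rpow (by positivity) (by positivity), ← rpow_mul hR.le, ← rpow_mul (by norm_num),
    div_mul_cancel₀ _ hq1, div_mul_cancel₀ _ hq1, rpow_one, rpow_two]

theorem mul_div_rpow_le_of_le_shellWidth {d : ℝ} (hq : 0 ≤ q) (hC : 1 ≤ C) (hR : 0 < R)
    (hd : 0 ≤ d) (hdw : d ≤ shellWidth q C R) : C * (d / R) ^ (q + 1) ≤ R ^ 2 / 8 := by
  calc C * (d / R) ^ (q + 1) ≤ C ^ (q + 1) * (d / R) ^ (q + 1) := by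
        gcongr
        exact self_le_rpow_of_one_le hC (by linarith)
    _ = (C * (d / R)) ^ (q + 1) := (mul_rpow (by positivity) (by positivity)).symm
    _ ≤ (C * (shellWidth q C R / R)) ^ (q + 1) := by gcongr
    _ = R ^ 2 / 8 := mul_shellWidth_div_rpow (by linarith) (by positivity) hR

theorem shellWidth_le_self (hq : -1 < q) (hC : 1 ≤ C) (hR : 0 ≤ R) (hR1 : R ≤ 1) :
    shellWidth q C R ≤ R := by
  have hq1 : 0 < q + 1 := by linarith
  have hdenom : 1 ≤ C * 8 ^ (1 / (q + 1)) :=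
    one_le_mul_of_one_le_of_one_le hC (one_le_rpow (by norm_num) (by positivity))
  calc shellWidth q C R ≤ R ^ ((q + 3) / (q + 1)) := div_le_self (by positivity) hdenom
    _ ≤ R := rpow_le_self_of_le_one hR hR1 ((one_le_div hq1).2 (by linarith))

end ShellWidth

theorem charFn_deriv_lower_bound_general {k ℓ q L0 Cu r : ℝ} {y : ℝ → ℝ} (_hk : -1 < k)
    (hl : -1 < ℓ) (hq : 0 ≤ q) (hL : 0 < L0) (hCu : 0 ≤ Cu) (hy : QuasiShell k ℓ L0 y)
    (hr : innerRadius L0 y ≤ r)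
    (hrw : r ≤ innerRadius L0 y + shellWidth q (Cmax Cu) (innerRadius L0 y))
    (hmatter : ∀ s, innerRadius L0 y ≤ s → s ≤ r → 0 ≤ charFn L0 y s →
      rho k ℓ L0 y s ≤ Cu * charFn L0 y s ^ q / s ^ 4 ∧
      pres k ℓ L0 y s ≤ Cu * charFn L0 y s ^ (q + 1) / s ^ 4) :
    1 / (2 * r) ≤ deriv (charFn L0 y) r := by
  have hl' : -(3 / 2) ≤ ℓ := by linarith
  have hmass := hy.hawkingMass_le hl' hL hCu hq hr fun s hs hsr hγ => (hmatter s hs hsr hγ).1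
  have hpres := hy.pres_le hl' hL hCu (by linarith) hr fun hγ => (hmatter r hr le_rfl hγ).2
  have hR : 0 < innerRadius L0 y := innerRadius_pos hL
  set R := innerRadius L0 y
  have hr0 : 0 < r := hR.trans_le hr
  have hsmall : 4 * π * Cu * ((r - R) / R) ^ (q + 1) ≤ R ^ 2 / 8 := by
    refine le_trans ?_ (mul_div_rpow_le_of_le_shellWidth hq (le_max_left _ _) hR (sub_nonneg.2 hr)
      (sub_le_iff_le_add'.2 hrw))
    have : 0 ≤ (r - R) / R := div_nonneg (sub_nonneg.2 hr) hR.le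
    gcongr
    exact (le_max_right _ _).trans (le_max_right _ _)
  have hm : hawkingMass k ℓ L0 y r ≤ r / 8 := by
    calc hawkingMass k ℓ L0 y r ≤ R ^ 2 / 8 / R := hmass.trans (by gcongr)
      _ = R / 8 := by field_simp
      _ ≤ r / 8 := by gcongr
  have hP : 4 * π * r * pres k ℓ L0 y r ≤ 1 / (8 * r) := by
    calc 4 * π * r * pres k ℓ L0 y r ≤ 4 * π * r * (Cu * ((r - R) / R) ^ (q + 1) / r ^ 4) := by
          gcongr
      _ = 4 * π * Cu * ((r - R) / R) ^ (q + 1) / r ^ 3 := by field_simp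
      _ ≤ r ^ 2 / 8 / r ^ 3 := by gcongr; exact hsmall.trans (by gcongr)
      _ = 1 / (8 * r) := by field_simp
  rw [(hasDerivAt_charFn hL.ne' hr0.ne' (hy.2 r hr0).2).deriv]
  exact one_div_two_mul_le_of_mass_le hr0 hm hP

/-- `γ'(r) ≥ 1/(2r)` on `[R₀, R₀+δ]` for `δ ≤ R₀^{(q+3)/(q+1)}/(C_m 8^{1/(q+1)})`
and `R₀` small, given the upper matter bounds. -/
theorem charFn_deriv_lower_bound (k ℓ L0 Cu : ℝ)
    (hk : 0 ≤ k) (hl : -(1 / 2) ≤ ℓ) (hL : 0 < L0) (hCu : 0 < Cu) :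
    ∃ ε : ℝ, 0 < ε ∧
      ∀ y : ℝ → ℝ, QuasiShell k ℓ L0 y →
        (∀ r, innerRadius L0 y ≤ r → r ≤ 2 * innerRadius L0 y →
          0 ≤ charFn L0 y r →
          rho k ℓ L0 y r ≤ Cu * charFn L0 y r ^ (k + ℓ + 3 / 2) / r ^ 4 ∧
          pres k ℓ L0 y r ≤ Cu * charFn L0 y r ^ (k + ℓ + 3 / 2 + 1) / r ^ 4) →
        innerRadius L0 y ≤ ε →
        ∀ δ : ℝ, 0 < δ →
          δ ≤ innerRadius L0 y ^ ((k + ℓ + 3 / 2 + 3) / (k + ℓ + 3 / 2 + 1)) /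
              (Cmax Cu * 8 ^ (1 / (k + ℓ + 3 / 2 + 1))) →
          ∀ r, innerRadius L0 y ≤ r → r ≤ innerRadius L0 y + δ →
            1 / (2 * r) ≤ deriv (charFn L0 y) r := by
  refine ⟨1, one_pos, fun y hy hmatter hR δ _ hδ r hr hrδ => ?_⟩
  have hδR : δ ≤ innerRadius L0 y :=
    hδ.trans (shellWidth_le_self (by linarith) (le_max_left _ _) (innerRadius_pos hL).le hR)
  exact charFn_deriv_lower_bound_general (by linarith) (by linarith) (by linarith) hL hCu.le hy hr
    (hrδ.trans (by gcongr; exact hδ)) fun s hs hsr => hmatter s hs (by linarith)
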